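/- Let Φ be a set of functional dependencies over a finite schema 𝓡 and let P⁺ be the preorder obtained from Φ. If Φ is forward repairable over an ordered partition P = [C_1,…,C_m] of 𝓡, then any two attributes a, a' with a ≡_{P⁺} a' belong to the same class of P. (Key step in the proof of Theorem 1(ii).) -/

import Mathlib

/-- A functional dependency over a set of attributes `α`: a pair `X → a`
with left-hand side `X` (a finite set of attributes) and right-hand side `a`. -/
structure FD (α : Type*) where
  lhs : Finset α
  rhs : α

/-- The projection `Φ[Z]` of a set of FDs over a set of attributes `Z`. -/
def proj {α : Type*} (Φ : Set (FD α)) (Z : Finset α) : Set (FD α) :=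
  {φ | φ ∈ Φ ∧ φ.lhs ⊆ Z ∧ φ.rhs ∈ Z}

/-- The prefix union `S_i = C_1 ∪ … ∪ C_i` of an ordered partition. -/
def prefS {α : Type*} [DecidableEq α] (P : List (Finset α)) (i : ℕ) : Finset α :=
  (P.take i).foldr (· ∪ ·) ∅

/-- `P = [C_1, …, C_m]` is an ordered partition of the (finite) schema:
a list of pairwise disjoint nonempty classes whose union is the whole schema. -/
def OrderedPartition {α : Type*} [DecidableEq α] [Fintype α] (P : List (Finset α)) : Prop :=
  (∀ C ∈ P, C.Nonempty) ∧ P.Pairwise Disjoint ∧ P.foldr (· ∪ ·) ∅ = Finset.univ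

/-- `Φ` is forward repairable over `P`: for every `i`, every FD in
`Φ[S_i] \ Φ[S_{i-1}]` has its right-hand side in `C_i`. -/
def ForwardRepairable {α : Type*} [DecidableEq α] (P : List (Finset α)) (Φ : Set (FD α)) : Prop :=
  ∀ (i : ℕ) (h : i < P.length),
    ∀ φ ∈ proj Φ (prefS P (i + 1)) \ proj Φ (prefS P i), φ.rhs ∈ P.get ⟨i, h⟩

/-- The base relation `P_Φ` obtained from a set of FDs: it contains all pairs
`(a, a)` and all pairs `(b, a)` with `b ∈ X` for some FD `X → a` in `Φ`. -/
def PPhi {α : Type*} (Φ : Set (FD α)) : α → α → Prop :=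
  fun b a => b = a ∨ ∃ φ ∈ Φ, φ.rhs = a ∧ b ∈ φ.lhs

/-- The preorder `P⁺` obtained from `Φ`: the transitive closure of `P_Φ`. -/
def Pplus {α : Type*} (Φ : Set (FD α)) : α → α → Prop :=
  Relation.TransGen (PPhi Φ)

/-- The equivalence `a ≡_{P⁺} a'`: mutual `P⁺`-comparability. -/
def eqvP {α : Type*} (Φ : Set (FD α)) (a a' : α) : Prop :=
  Pplus Φ a a' ∧ Pplus Φ a' a

/-- The ordered partition `P` is induced by the preorder `P⁺` obtained from `Φ`:
its classes are exactly the equivalence classes of `≡_{P⁺}`, and earlier classes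
are never `P⁺`-above later ones. -/
def InducedBy {α : Type*} (P : List (Finset α)) (Φ : Set (FD α)) : Prop :=
  (∀ a a' : α, eqvP Φ a a' ↔
      ∃ (i : ℕ) (h : i < P.length), a ∈ P.get ⟨i, h⟩ ∧ a' ∈ P.get ⟨i, h⟩) ∧
  (∀ (i j : ℕ) (hi : i < P.length) (hj : j < P.length), i < j →
      ∀ a ∈ P.get ⟨i, hi⟩, ∀ a' ∈ P.get ⟨j, hj⟩, ¬ Pplus Φ a' a)

/-!
By descending induction on `i`, each prefix union `S_i` contains everything `P⁺`-below its elements: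
an FD `X → a` with `a ∈ S_i` has `X ⊆ S_{i+1}`, and `X ⊈ S_i` would force `a` into the class
`C_{i+1}`, which is disjoint from `S_i`. Equivalent attributes therefore lie in the same prefix
unions, hence in the same class, since `C_{i+1} = S_{i+1} \ S_i`.
-/

section PrefixUnions

variable {α : Type*} [DecidableEq α] {P : List (Finset α)}

theorem mem_foldr_union_iff {l : List (Finset α)} {a : α} :
    a ∈ l.foldr (· ∪ ·) ∅ ↔ ∃ C ∈ l, a ∈ C := by
  induction l with
  | nil => simp
  | cons C l ih => simp [ih]

theorem prefS_length : prefS P P.length = P.foldr (· ∪ ·) ∅ := by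
  rw [prefS, List.take_length]

theorem prefS_succ {i : ℕ} (hi : i < P.length) :
    prefS P (i + 1) = prefS P i ∪ P.get ⟨i, hi⟩ := by
  ext a
  simp only [prefS, Finset.mem_union, mem_foldr_union_iff, List.take_succ_eq_append_getElem hi,
    List.mem_append, List.mem_singleton, or_and_right, exists_or, exists_eq_left,
    List.get_eq_getElem]

theorem disjoint_prefS_get (hP : P.Pairwise Disjoint) {i : ℕ} (hi : i < P.length) :
    Disjoint (prefS P i) (P.get ⟨i, hi⟩) := by
  simp only [Finset.disjoint_left, prefS, mem_foldr_union_iff, List.mem_take_iff_getElem]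
  rintro a ⟨_, ⟨j, hj, rfl⟩, haj⟩
  have hji : j < i := hj.trans_le (min_le_left _ _)
  exact Finset.disjoint_left.mp (List.pairwise_iff_getElem.mp hP j i _ hi hji) haj

theorem get_eq_prefS_succ_sdiff (hP : P.Pairwise Disjoint) {i : ℕ} (hi : i < P.length) :
    P.get ⟨i, hi⟩ = prefS P (i + 1) \ prefS P i := by
  rw [prefS_succ hi, Finset.union_sdiff_cancel_left (disjoint_prefS_get hP hi)]

end PrefixUnions

/-- `Z` is closed under passing from the right-hand side of an FD in `Φ` to its left-hand side;
equivalently, `Z` is a lower set for the preorder `P⁺`. -/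
def LhsClosed {α : Type*} (Φ : Set (FD α)) (Z : Finset α) : Prop :=
  ∀ φ ∈ Φ, φ.rhs ∈ Z → φ.lhs ⊆ Z

namespace LhsClosed

variable {α : Type*} {Φ : Set (FD α)} {Z : Finset α} {a b : α}

theorem mem_of_PPhi (hZ : LhsClosed Φ Z) (h : PPhi Φ b a) (ha : a ∈ Z) : b ∈ Z := by
  obtain rfl | ⟨φ, hφ, rfl, hb⟩ := h
  · exact ha
  · exact hZ φ hφ ha hb

theorem mem_of_Pplus (hZ : LhsClosed Φ Z) (h : Pplus Φ b a) (ha : a ∈ Z) : b ∈ Z :=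
  Relation.TransGen.closed' (P := (· ∈ Z)) hZ.mem_of_PPhi h ha

theorem mem_iff_of_eqvP (hZ : LhsClosed Φ Z) (h : eqvP Φ a b) : a ∈ Z ↔ b ∈ Z :=
  ⟨hZ.mem_of_Pplus h.2, hZ.mem_of_Pplus h.1⟩

end LhsClosed

namespace ForwardRepairable

variable {α : Type*} [DecidableEq α] {Φ : Set (FD α)} {P : List (Finset α)}

theorem lhsClosed_prefS_of_succ (hfwd : ForwardRepairable P Φ) (hP : P.Pairwise Disjoint)
    {i : ℕ} (hi : i < P.length) (hclosed : LhsClosed Φ (prefS P (i + 1))) :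
    LhsClosed Φ (prefS P i) := by
  intro φ hφ hrhs
  by_contra hlhs
  have hrhs_succ : φ.rhs ∈ prefS P (i + 1) := by
    rw [prefS_succ hi]
    exact Finset.mem_union_left _ hrhs
  have hrhs_get : φ.rhs ∈ P.get ⟨i, hi⟩ :=
    hfwd i hi φ ⟨⟨hφ, hclosed φ hφ hrhs_succ, hrhs_succ⟩, fun hproj => hlhs hproj.2.1⟩
  exact Finset.disjoint_left.mp (disjoint_prefS_get hP hi) hrhs hrhs_get

theorem lhsClosed_prefS (hfwd : ForwardRepairable P Φ) (hP : P.Pairwise Disjoint)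
    (hΦ : LhsClosed Φ (prefS P P.length)) {i : ℕ} (hi : i ≤ P.length) :
    LhsClosed Φ (prefS P i) := by
  induction hi using Nat.decreasingInduction with
  | self => exact hΦ
  | of_succ i hi ih => exact hfwd.lhsClosed_prefS_of_succ hP hi ih

end ForwardRepairable

theorem forwardRepairable_eqv_same_class_general {α : Type*} [DecidableEq α]
    {Φ : Set (FD α)} {P : List (Finset α)} (hP : P.Pairwise Disjoint)
    (hΦ : LhsClosed Φ (prefS P P.length)) (hfwd : ForwardRepairable P Φ)
    {a a' : α} (ha : a ∈ prefS P P.length) (h : eqvP Φ a a') :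
    ∃ (i : ℕ) (hi : i < P.length), a ∈ P.get ⟨i, hi⟩ ∧ a' ∈ P.get ⟨i, hi⟩ := by
  rw [prefS_length] at ha
  obtain ⟨C, hC, haC⟩ := mem_foldr_union_iff.mp ha
  obtain ⟨⟨i, hi⟩, rfl⟩ := List.get_of_mem hC
  have hmem_prefS : ∀ {k : ℕ}, k ≤ P.length → (a ∈ prefS P k ↔ a' ∈ prefS P k) :=
    fun hk => (hfwd.lhsClosed_prefS hP hΦ hk).mem_iff_of_eqvP h
  have hmem_get : a ∈ P.get ⟨i, hi⟩ ↔ a' ∈ P.get ⟨i, hi⟩ := by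
    simp only [get_eq_prefS_succ_sdiff hP hi, Finset.mem_sdiff, hmem_prefS hi, hmem_prefS hi.le]
  exact ⟨i, hi, haC, hmem_get.mp haC⟩

/-- If `Φ` is forward repairable over an ordered partition `P`, then any two
attributes equivalent under `≡_{P⁺}` belong to the same class of `P`. -/
theorem forwardRepairable_eqv_same_class {α : Type*} [DecidableEq α] [Fintype α]
    (Φ : Set (FD α)) (P : List (Finset α))
    (hP : OrderedPartition P)
    (hfwd : ForwardRepairable P Φ)
    (a a' : α) (h : eqvP Φ a a') :
    ∃ (i : ℕ) (hi : i < P.length), a ∈ P.get ⟨i, hi⟩ ∧ a' ∈ P.get ⟨i, hi⟩ := by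
  have hcover : prefS P P.length = Finset.univ := prefS_length.trans hP.2.2
  exact forwardRepairable_eqv_same_class_general hP.2.1 (by simp [LhsClosed, hcover]) hfwd
    (by simp [hcover]) h
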